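/- Let n ≥ 2, R > 0 and Q > 0. There exists a constant C > 0, depending only on n, R and Q, with the following property: for every measurable V : ℝⁿ → ℝ with |V(x)| ≤ Q for all x, every real λ ≥ 2Q + 1, and every smooth u : ℝⁿ → ℝ satisfying Δ²u + V·u = λ·u at every point of the closed ball of radius R centered at the origin, with u(x) = 0 and Δu(x) = 0 for every x ∈ ∂B_R, and normalized so that ∫_{B_R} u² dx = 1, one has ∫_{∂B_R} |∂_ν u|² dσ ≤ C·λ and ∫_{∂B_R} |∂_ν(Δu)|² dσ ≤ C·λ². -/

import Mathlib

open MeasureTheory Metric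

/-- The Laplacian of a real-valued function on `EuclideanSpace ℝ (Fin n)`:
the trace of the second Fréchet derivative. -/
noncomputable def lapR (n : ℕ) (f : EuclideanSpace ℝ (Fin n) → ℝ) (x : EuclideanSpace ℝ (Fin n)) : ℝ :=
  ∑ i : Fin n, fderiv ℝ (fderiv ℝ f) x (EuclideanSpace.single i 1) (EuclideanSpace.single i 1)

/-- The normal derivative on the sphere of radius `R`: `∂_ν f (x) = (fderiv f x)(x/R)`. -/
noncomputable def normalDerivR (n : ℕ) (R : ℝ) (f : EuclideanSpace ℝ (Fin n) → ℝ)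
    (x : EuclideanSpace ℝ (Fin n)) : ℝ :=
  fderiv ℝ f x (R⁻¹ • x)

/-!
If `f` vanishes on the sphere `∂B_R`, then `∇f` is radial there, so the field
`⟪x, ∇f⟫ ∇f - ‖∇f‖² x` vanishes on `∂B_R` and the divergence theorem applied to it (Rellich's
identity) expresses `∫_{∂B_R} |∂_ν f|²` through the integrals over `B_R` of `⟪x, ∇f⟫ Δf` and
`‖∇f‖²`. Green's identity and the Poincaré inequality bound both by `∫_{B_R} (Δf)²`. This is used
for `f = u` and for `f = Δu`: the symmetry of `Δ` gives `∫ (Δu)² = ∫ u Δ²u ≤ 2λ ∫ u²`, while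
`|Δ²u| ≤ 2λ |u|` gives `∫ (Δ²u)² ≤ 4λ² ∫ u²`.

The identities hold for the polar-coordinate measure `Measure.toSphere`. The Hausdorff measure is
bounded by a multiple of it through a packing argument, because spherical caps of radius `r` have
`toSphere` measure at least a constant times `r ^ (n - 1)`.
-/

open Set Filter Topology Bornology Module InnerProductSpace
open scoped NNReal ENNReal Gradient Laplacian

theorem integrableOn_of_continuous_of_isBounded {X F : Type*} [PseudoMetricSpace X] [ProperSpace X]
    [MeasurableSpace X] [OpensMeasurableSpace X] (μ : Measure X) [IsFiniteMeasureOnCompacts μ]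
    [NormedAddCommGroup F] {g : X → F} {s : Set X} (hg : Continuous g) (hs : IsBounded s) :
    IntegrableOn g s μ :=
  (hg.continuousOn.integrableOn_compact' hs.isCompact_closure
    isClosed_closure.measurableSet).mono_set subset_closure

theorem inter_frontier_nonempty_of_isPreconnected {X : Type*} [TopologicalSpace X] {s t : Set X}
    (ht : IsPreconnected t) (hts : (t ∩ s).Nonempty) (hts' : (t \ s).Nonempty) :
    (t ∩ frontier s).Nonempty := by
  by_contra hempty
  have hdisj : ∀ z ∈ t, z ∉ frontier s := fun z hz hzf => hempty ⟨z, hz, hzf⟩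
  obtain ⟨x, hxt, hxs⟩ := hts
  obtain ⟨y, hyt, hys⟩ := hts'
  have hx : x ∈ interior s := by
    by_contra h
    exact hdisj x hxt ((mem_frontier_iff_notMem_interior hxs).2 h)
  have hy : y ∈ (closure s)ᶜ := fun h => hdisj y hyt ⟨h, fun h' => hys (interior_subset h')⟩
  have hcover : t ⊆ interior s ∪ (closure s)ᶜ := fun z hz => by
    by_contra h
    rw [mem_union, not_or, mem_compl_iff, not_not] at h
    exact hdisj z hz ⟨h.2, h.1⟩
  obtain ⟨z, -, hz, hz'⟩ := ht _ _ isOpen_interior isClosed_closure.isOpen_compl hcover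
    ⟨x, hxt, hx⟩ ⟨y, hyt, hy⟩
  exact hz' (interior_subset_closure hz)

theorem lipschitzWith_indicator_of_eq_zero_on_frontier {E F : Type*} [NormedAddCommGroup E]
    [NormedSpace ℝ E] [NormedAddCommGroup F] {s : Set E} {f : E → F} {K : ℝ≥0}
    (hf : LipschitzOnWith K f (closure s)) (h0 : ∀ x ∈ frontier s, f x = 0) :
    LipschitzWith K (s.indicator f) := by
  have norm_le : ∀ x ∈ s, ∀ y ∉ s, ‖f x‖ ≤ K * dist x y := fun x hx y hy => by
    obtain ⟨z, hzseg, hz⟩ := inter_frontier_nonempty_of_isPreconnected (s := s)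
      (convex_segment x y).isPreconnected ⟨x, left_mem_segment ℝ x y, hx⟩
      ⟨y, right_mem_segment ℝ x y, hy⟩
    calc ‖f x‖ = dist (f x) (f z) := by rw [h0 z hz, dist_zero_right]
      _ ≤ K * dist x z := hf.dist_le_mul x (subset_closure hx) z (frontier_subset_closure hz)
      _ ≤ K * dist x y := by
        gcongr
        rw [← dist_add_dist_of_mem_segment hzseg]
        exact le_add_of_nonneg_right dist_nonneg
  refine LipschitzWith.of_dist_le_mul fun x y => ?_
  by_cases hx : x ∈ s <;> by_cases hy : y ∈ s
  · simpa only [indicator_of_mem hx, indicator_of_mem hy] using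
      hf.dist_le_mul x (subset_closure hx) y (subset_closure hy)
  · simpa only [indicator_of_mem hx, indicator_of_notMem hy, dist_zero_right] using
      norm_le x hx y hy
  · simpa only [indicator_of_notMem hx, indicator_of_mem hy, dist_zero_left, dist_comm x y] using
      norm_le y hy x hx
  · simp only [indicator_of_notMem hx, indicator_of_notMem hy, dist_self]
    positivity

theorem setIntegral_fderiv_eq_zero_of_eq_zero_on_frontier {E : Type*} [NormedAddCommGroup E]
    [NormedSpace ℝ E] [FiniteDimensional ℝ E] [MeasurableSpace E] [BorelSpace E] (μ : Measure E)
    [μ.IsAddHaarMeasure] {s : Set E} (hs : Convex ℝ s) (hsb : IsBounded s) {f : E → ℝ}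
    (hf : ContDiff ℝ 1 f) (h0 : ∀ x ∈ frontier s, f x = 0) (v : E) :
    ∫ x in s, fderiv ℝ f x v ∂μ = 0 := by
  have : ProperSpace E := FiniteDimensional.proper ℝ E
  have hK : IsCompact (closure s) := hsb.isCompact_closure
  obtain ⟨M, hM⟩ :=
    hK.exists_bound_of_continuousOn (hf.continuous_fderiv one_ne_zero).continuousOn
  have hlip : LipschitzOnWith M.toNNReal f (closure s) :=
    hs.closure.lipschitzOnWith_of_nnnorm_fderiv_le (𝕜 := ℝ)
      (fun x _ => hf.differentiable one_ne_zero x)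
      (fun x hx => NNReal.coe_le_coe.1 ((hM x hx).trans (Real.le_coe_toNNReal M)))
  have hsupp : HasCompactSupport (s.indicator f) :=
    HasCompactSupport.intro hK fun x hx => indicator_of_notMem (fun h => hx (subset_closure h)) _
  have hlineDeriv : ∫ x, lineDeriv ℝ (s.indicator f) x v ∂μ = 0 := by
    simpa [lineDeriv] using ((LipschitzWith.const (1 : ℝ)).integral_lineDeriv_mul_eq (μ := μ)
      (lipschitzWith_indicator_of_eq_zero_on_frontier hlip h0) hsupp (-v)).symm
  rw [← integral_indicator₀ (hs.nullMeasurableSet μ), ← hlineDeriv]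
  refine integral_congr_ae ?_
  filter_upwards [measure_eq_zero_iff_ae_notMem.1 (hs.addHaar_frontier μ)] with x hx
  by_cases hxs : x ∈ s
  · have hxi : s ∈ 𝓝 x := mem_interior_iff_mem_nhds.1 <| by
      by_contra h
      exact hx ((mem_frontier_iff_notMem_interior hxs).2 h)
    have heq : s.indicator f =ᶠ[𝓝 x] f := mem_of_superset hxi fun y hy => indicator_of_mem hy f
    rw [indicator_of_mem hxs, heq.lineDeriv_eq,
      (hf.differentiable one_ne_zero x).lineDeriv_eq_fderiv]
  · have hxc : x ∉ closure s := fun h => hx ⟨h, fun h' => hxs (interior_subset h')⟩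
    have heq : s.indicator f =ᶠ[𝓝 x] fun _ => 0 :=
      mem_of_superset (isClosed_closure.isOpen_compl.mem_nhds hxc) fun y hy =>
        indicator_of_notMem (fun h => hy (subset_closure h)) f
    rw [indicator_of_notMem hxs, heq.lineDeriv_eq, lineDeriv, deriv_const]

section Divergence

variable {E : Type*} [NormedAddCommGroup E] [InnerProductSpace ℝ E]
  {f : E → ℝ} {X Y : E → E} {x : E}

/-- The divergence of a vector field on a finite-dimensional inner product space, as the trace of
its derivative; it is the integrand of the divergence theorem. -/
noncomputable def divergence (X : E → E) (x : E) : ℝ :=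
  LinearMap.trace ℝ E (fderiv ℝ X x)

theorem divergence_eq_sum {ι : Type*} [Fintype ι] (b : OrthonormalBasis ι ℝ E) (X : E → E) (x : E) :
    divergence X x = ∑ i, ⟪b i, fderiv ℝ X x (b i)⟫_ℝ :=
  LinearMap.trace_eq_sum_inner _ b

theorem divergence_id [FiniteDimensional ℝ E] : divergence (id : E → E) x = finrank ℝ E := by
  simp [divergence]

theorem divergence_sub (hX : DifferentiableAt ℝ X x) (hY : DifferentiableAt ℝ Y x) :
    divergence (X - Y) x = divergence X x - divergence Y x := by
  simp [divergence, fderiv_sub hX hY]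

theorem divergence_smul [FiniteDimensional ℝ E] (hf : DifferentiableAt ℝ f x)
    (hX : DifferentiableAt ℝ X x) :
    divergence (f • X) x = f x * divergence X x + fderiv ℝ f x (X x) := by
  rw [divergence, fderiv_smul hf hX]
  simp [divergence]

end Divergence

section Gradient

variable {E : Type*} [NormedAddCommGroup E] [InnerProductSpace ℝ E] {f : E → ℝ}

theorem contDiff_gradient [CompleteSpace E] {n : WithTop ℕ∞} (hf : ContDiff ℝ (n + 1) f) :
    ContDiff ℝ n (∇ f) :=
  (toDual ℝ E).symm.contDiff.comp (hf.fderiv_right le_rfl)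

theorem inner_fderiv_gradient [CompleteSpace E] (hf : ContDiff ℝ 2 f) (x v w : E) :
    ⟪fderiv ℝ (∇ f) x v, w⟫_ℝ = fderiv ℝ (fderiv ℝ f) x v w := by
  have hdiff : DifferentiableAt ℝ (fderiv ℝ f) x :=
    (hf.fderiv_right (m := 1) le_rfl).differentiable one_ne_zero x
  have hgrad : DifferentiableAt ℝ (∇ f) x := (contDiff_gradient hf).differentiable one_ne_zero x
  calc ⟪fderiv ℝ (∇ f) x v, w⟫_ℝ = fderiv ℝ (fun y => ⟪∇ f y, w⟫_ℝ) x v := by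
        rw [fderiv_inner_apply ℝ hgrad (differentiableAt_const w), fderiv_const_apply]
        simp
    _ = fderiv ℝ (fun y => fderiv ℝ f y w) x v := by simp only [inner_gradient_left]
    _ = fderiv ℝ (fderiv ℝ f) x v w := by simp [fderiv_clm_apply hdiff (differentiableAt_const w)]

theorem inner_fderiv_gradient_comm [CompleteSpace E] (hf : ContDiff ℝ 2 f) (x v w : E) :
    ⟪fderiv ℝ (∇ f) x v, w⟫_ℝ = ⟪fderiv ℝ (∇ f) x w, v⟫_ℝ := by
  rw [inner_fderiv_gradient hf, inner_fderiv_gradient hf]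
  exact (hf.contDiffAt.isSymmSndFDerivAt (by simp)) v w

theorem divergence_gradient [FiniteDimensional ℝ E] (hf : ContDiff ℝ 2 f) (x : E) :
    divergence (∇ f) x = Δ f x := by
  rw [divergence_eq_sum (stdOrthonormalBasis ℝ E), laplacian_eq_iteratedFDeriv_stdOrthonormalBasis]
  refine Finset.sum_congr rfl fun i _ => ?_
  rw [real_inner_comm, inner_fderiv_gradient hf, iteratedFDeriv_two_apply]
  rfl

theorem contDiff_laplacian [FiniteDimensional ℝ E] {n : WithTop ℕ∞} (hf : ContDiff ℝ (n + 2) f) :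
    ContDiff ℝ n (Δ f) := by
  rw [laplacian_eq_iteratedFDeriv_stdOrthonormalBasis]
  exact ContDiff.sum fun i _ =>
    (ContinuousMultilinearMap.apply ℝ (fun _ : Fin 2 => E) ℝ _).contDiff.comp
      (hf.iteratedFDeriv_right le_rfl)

end Gradient

section DivergenceTheorem

variable {E : Type*} [NormedAddCommGroup E] [InnerProductSpace ℝ E] [FiniteDimensional ℝ E]
  [MeasurableSpace E] [BorelSpace E] (μ : Measure E) [μ.IsAddHaarMeasure] {s : Set E}

theorem setIntegral_divergence_eq_zero (hs : Convex ℝ s) (hsb : IsBounded s) {X : E → E}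
    (hX : ContDiff ℝ 1 X) (h0 : ∀ x ∈ frontier s, X x = 0) :
    ∫ x in s, divergence X x ∂μ = 0 := by
  set b := stdOrthonormalBasis ℝ E
  have hfderiv (i) (x : E) :
      ⟪b i, fderiv ℝ X x (b i)⟫_ℝ = fderiv ℝ (fun y => ⟪b i, X y⟫_ℝ) x (b i) := by
    rw [fderiv_inner_apply ℝ (differentiableAt_const _) (hX.differentiable one_ne_zero x),
      fderiv_const_apply]
    simp
  have hcont (i) : Continuous fun x => ⟪b i, fderiv ℝ X x (b i)⟫_ℝ :=
    continuous_const.inner ((hX.continuous_fderiv one_ne_zero).clm_apply continuous_const)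
  simp only [divergence_eq_sum b]
  rw [integral_finsetSum _ fun i _ => integrableOn_of_continuous_of_isBounded μ (hcont i) hsb]
  refine Finset.sum_eq_zero fun i _ => ?_
  simp only [hfderiv]
  exact setIntegral_fderiv_eq_zero_of_eq_zero_on_frontier μ hs hsb (contDiff_const.inner ℝ hX)
    (fun x hx => by rw [h0 x hx, inner_zero_right]) _

variable {f g : E → ℝ}

theorem setIntegral_inner_gradient (hs : Convex ℝ s) (hsb : IsBounded s) (hf : ContDiff ℝ 1 f)
    (hg : ContDiff ℝ 2 g) (h0 : ∀ x ∈ frontier s, f x = 0) :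
    ∫ x in s, ⟪∇ f x, ∇ g x⟫_ℝ ∂μ = -∫ x in s, f x * Δ g x ∂μ := by
  have hgrad : ContDiff ℝ 1 (∇ g) := contDiff_gradient hg
  have hlap : Continuous (Δ g) := (contDiff_laplacian (n := 0) hg).continuous
  have hdiv : ∀ x, divergence (f • ∇ g) x = f x * Δ g x + ⟪∇ f x, ∇ g x⟫_ℝ := fun x => by
    rw [divergence_smul (hf.differentiable one_ne_zero x) (hgrad.differentiable one_ne_zero x),
      divergence_gradient hg, inner_gradient_left]
  have hzero := setIntegral_divergence_eq_zero μ hs hsb (hf.smul hgrad)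
    fun x hx => by rw [Pi.smul_apply', h0 x hx, zero_smul]
  have hint₁ : IntegrableOn (fun x => f x * Δ g x) s μ :=
    integrableOn_of_continuous_of_isBounded μ (hf.continuous.mul hlap) hsb
  have hint₂ : IntegrableOn (fun x => ⟪∇ f x, ∇ g x⟫_ℝ) s μ :=
    integrableOn_of_continuous_of_isBounded μ
      ((contDiff_gradient (n := 0) hf).continuous.inner hgrad.continuous) hsb
  simp only [hdiv] at hzero
  rw [integral_add hint₁ hint₂] at hzero
  linarith

theorem setIntegral_mul_laplacian_comm (hs : Convex ℝ s) (hsb : IsBounded s)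
    (hf : ContDiff ℝ 2 f) (hg : ContDiff ℝ 2 g) (hf0 : ∀ x ∈ frontier s, f x = 0)
    (hg0 : ∀ x ∈ frontier s, g x = 0) :
    ∫ x in s, f x * Δ g x ∂μ = ∫ x in s, g x * Δ f x ∂μ := by
  have hfg := setIntegral_inner_gradient μ hs hsb (hf.of_le one_le_two) hg hf0
  have hgf := setIntegral_inner_gradient μ hs hsb (hg.of_le one_le_two) hf hg0
  simp only [real_inner_comm] at hfg hgf
  linarith

end DivergenceTheorem

section PolarCoordinates

variable {E F : Type*} [NormedAddCommGroup E] [NormedSpace ℝ E] [FiniteDimensional ℝ E]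
  [MeasurableSpace E] [BorelSpace E] [Nontrivial E] (μ : Measure E) [μ.IsAddHaarMeasure]
  [NormedAddCommGroup F] [NormedSpace ℝ F]

theorem integral_volumeIoiPow (n : ℕ) (g : ℝ → F) :
    ∫ r : Ioi (0 : ℝ), g r ∂Measure.volumeIoiPow n = ∫ r in Ioi (0 : ℝ), r ^ n • g r := by
  have hmeas : Measurable fun r : Ioi (0 : ℝ) => ((r : ℝ) ^ n).toNNReal := by fun_prop
  simp only [Measure.volumeIoiPow, ENNReal.ofReal]
  rw [integral_withDensity_eq_integral_smul hmeas,
    integral_subtype_comap measurableSet_Ioi fun r : ℝ => (r ^ n).toNNReal • g r]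
  refine setIntegral_congr_fun measurableSet_Ioi fun r hr => ?_
  rw [NNReal.smul_def, Real.coe_toNNReal _ (pow_nonneg (le_of_lt hr) n)]

theorem integral_eq_integral_toSphere_integral_Ioi {g : E → F} (hg : Integrable g μ) :
    ∫ x, g x ∂μ =
      ∫ ω : sphere (0 : E) 1, (∫ r in Ioi (0 : ℝ), r ^ (finrank ℝ E - 1) • g (r • (ω : E)))
        ∂μ.toSphere := by
  set e := homeomorphUnitSphereProd E
  have hmp := μ.measurePreserving_homeomorphUnitSphereProd
  have hemb : MeasurableEmbedding e := e.measurableEmbedding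
  have hcomp : (fun p : sphere (0 : E) 1 × Ioi (0 : ℝ) => g ((p.2 : ℝ) • (p.1 : E))) ∘ e =
      fun x : ({0}ᶜ : Set E) => g x := by
    funext x
    have hx : ‖(x : E)‖ ≠ 0 := norm_ne_zero_iff.2 x.2
    simp [e, smul_smul, mul_inv_cancel₀ hx]
  have hint : Integrable (fun p : sphere (0 : E) 1 × Ioi (0 : ℝ) => g ((p.2 : ℝ) • (p.1 : E)))
      (μ.toSphere.prod (Measure.volumeIoiPow (finrank ℝ E - 1))) := by
    rw [← hmp.integrable_comp_emb hemb, hcomp]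
    exact (integrableOn_iff_comap_subtypeVal (measurableSet_singleton (0 : E)).compl).1
      hg.integrableOn
  calc ∫ x, g x ∂μ = ∫ x : ({0}ᶜ : Set E), g x ∂μ.comap (↑) := by
        rw [integral_subtype_comap (measurableSet_singleton _).compl g, restrict_compl_singleton]
    _ = ∫ p : sphere (0 : E) 1 × Ioi (0 : ℝ), g ((p.2 : ℝ) • (p.1 : E))
          ∂μ.toSphere.prod (Measure.volumeIoiPow (finrank ℝ E - 1)) := by
        rw [← hmp.integral_comp hemb]
        exact integral_congr_ae (.of_forall fun x => (congrFun hcomp x).symm)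
    _ = _ := by
        rw [integral_prod _ hint]
        exact integral_congr_ae (.of_forall fun ω =>
          integral_volumeIoiPow _ fun r => g (r • (ω : E)))

theorem setIntegral_ball_eq_integral_toSphere {R : ℝ} (hR : 0 ≤ R) {g : E → F}
    (hg : IntegrableOn g (ball 0 R) μ) :
    ∫ x in ball 0 R, g x ∂μ =
      ∫ ω : sphere (0 : E) 1, (∫ r in (0 : ℝ)..R, r ^ (finrank ℝ E - 1) • g (r • (ω : E)))
        ∂μ.toSphere := by
  rw [← integral_indicator measurableSet_ball, integral_eq_integral_toSphere_integral_Ioi μ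
    (hg.integrable_indicator measurableSet_ball)]
  refine integral_congr_ae (.of_forall fun ω => ?_)
  have hind : EqOn (fun r : ℝ => r ^ (finrank ℝ E - 1) • (ball 0 R).indicator g (r • (ω : E)))
      ((Iio R).indicator fun r => r ^ (finrank ℝ E - 1) • g (r • (ω : E))) (Ioi 0) := fun r hr => by
    have hmem : r • (ω : E) ∈ ball (0 : E) R ↔ r ∈ Iio R := by
      simp [norm_smul, abs_of_pos (mem_Ioi.1 hr)]
    by_cases h : r ∈ Iio R <;> simp [indicator, hmem, h]
  dsimp only
  rw [setIntegral_congr_fun measurableSet_Ioi hind, setIntegral_indicator measurableSet_Iio,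
    Ioi_inter_Iio, intervalIntegral.integral_of_le hR, integral_Ioc_eq_integral_Ioo]

theorem setIntegral_ball_finrank_mul_add_fderiv {R : ℝ} (hR : 0 ≤ R) {h : E → ℝ}
    (hh : ContDiff ℝ 1 h) :
    ∫ x in ball 0 R, (finrank ℝ E * h x + fderiv ℝ h x x) ∂μ =
      R ^ finrank ℝ E * ∫ ω : sphere (0 : E) 1, h (R • (ω : E)) ∂μ.toSphere := by
  have hcont : Continuous fun x => finrank ℝ E * h x + fderiv ℝ h x x :=
    (continuous_const.mul hh.continuous).add
      ((hh.continuous_fderiv one_ne_zero).clm_apply continuous_id)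
  have hd : finrank ℝ E ≠ 0 := finrank_pos.ne'
  rw [setIntegral_ball_eq_integral_toSphere μ hR
    (integrableOn_of_continuous_of_isBounded μ hcont isBounded_ball), ← integral_const_mul]
  refine integral_congr_ae (.of_forall fun ω => ?_)
  have hderiv : ∀ r : ℝ, HasDerivAt (fun r : ℝ => r ^ finrank ℝ E * h (r • (ω : E)))
      (r ^ (finrank ℝ E - 1) • (finrank ℝ E * h (r • (ω : E)) +
        fderiv ℝ h (r • (ω : E)) (r • (ω : E)))) r := fun r => by
    have hray : HasDerivAt (fun r : ℝ => r • (ω : E)) (ω : E) r := by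
      simpa using (hasDerivAt_id r).smul_const (ω : E)
    refine ((hasDerivAt_pow (finrank ℝ E) r).mul ((hh.differentiable one_ne_zero
      (r • (ω : E))).hasFDerivAt.comp_hasDerivAt r hray)).congr_deriv ?_
    rw [map_smul, smul_eq_mul, smul_eq_mul, mul_add, ← mul_assoc _ r, pow_sub_one_mul hd,
      Function.comp_apply]
    ring
  have hray : Continuous fun r : ℝ => r • (ω : E) := continuous_id.smul continuous_const
  dsimp only
  rw [intervalIntegral.integral_eq_sub_of_hasDerivAt (fun r _ => hderiv r)
    (((continuous_pow _).smul (hcont.comp hray)).intervalIntegrable 0 R), zero_pow hd, zero_mul,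
    sub_zero]

end PolarCoordinates

section Rellich

variable {E : Type*} [NormedAddCommGroup E] [InnerProductSpace ℝ E]

theorem exists_gradient_eq_smul_of_eq_zero_on_sphere [CompleteSpace E] {f : E → ℝ}
    (hf : ContDiff ℝ 1 f) {R : ℝ} (hR : R ≠ 0) (h0 : ∀ x ∈ sphere (0 : E) R, f x = 0) {x : E}
    (hx : x ∈ sphere 0 R) : ∃ c : ℝ, ∇ f x = c • x := by
  have hxR : ‖x‖ = R := mem_sphere_zero_iff_norm.1 hx
  have hx0 : x ≠ 0 := norm_ne_zero_iff.1 (hxR ▸ hR)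
  have hextr : IsLocalExtrOn f {y | ‖y‖ ^ 2 = ‖x‖ ^ 2} x := by
    refine Or.inl (eventually_nhdsWithin_of_forall fun y hy => ?_)
    have hyR : ‖y‖ = ‖x‖ := (pow_left_inj₀ (norm_nonneg y) (norm_nonneg x) two_ne_zero).1 hy
    rw [h0 x hx, h0 y (mem_sphere_zero_iff_norm.2 (hyR.trans hxR))]
  obtain ⟨a, b, hab, hlagrange⟩ := hextr.exists_multipliers_of_hasStrictFDerivAt_1d
    (hasStrictFDerivAt_norm_sq x) (hf.contDiffAt.hasStrictFDerivAt one_ne_zero)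
  have hvec : (2 * a) • x + b • ∇ f x = 0 := ext_inner_right ℝ fun v => by
    have := congrArg (fun L : E →L[ℝ] ℝ => L v) hlagrange
    simp only [add_apply, smul_apply, zero_apply, innerSL_apply_apply,
      smul_eq_mul, nsmul_eq_mul, Nat.cast_ofNat] at this
    rw [inner_add_left, inner_smul_left, inner_smul_left, inner_gradient_left, inner_zero_left]
    simp only [conj_trivial]
    linarith
  have hb : b ≠ 0 := by
    rintro rfl
    simp_all
  exact ⟨-(b⁻¹ * (2 * a)), by
    rw [neg_smul, mul_smul, eq_neg_of_add_eq_zero_left hvec, smul_neg, neg_neg, inv_smul_smul₀ hb]⟩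

variable [FiniteDimensional ℝ E]

/-- The vector field `⟪x, ∇f⟫ ∇f - ‖∇f‖² x`, whose divergence underlies the Rellich identity: it
vanishes wherever `∇f` is parallel to `x`. -/
noncomputable def rellichField (f : E → ℝ) : E → E :=
  (fun x => ⟪x, ∇ f x⟫_ℝ) • ∇ f - (fun x => ‖∇ f x‖ ^ 2) • id

theorem rellichField_eq_zero_of_gradient_eq_smul {f : E → ℝ} {x : E} {c : ℝ} (hc : ∇ f x = c • x) :
    rellichField f x = 0 := by
  have hcoeff : c * ‖x‖ ^ 2 * c = (|c| * ‖x‖) ^ 2 := by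
    rw [mul_pow, sq_abs]
    ring
  simp [-inner_gradient_right, rellichField, hc, norm_smul, inner_smul_right, smul_smul, hcoeff]

theorem contDiff_rellichField {f : E → ℝ} (hf : ContDiff ℝ 2 f) : ContDiff ℝ 1 (rellichField f) :=
  have hgrad : ContDiff ℝ 1 (∇ f) := contDiff_gradient hf
  ((contDiff_id.inner ℝ hgrad).smul hgrad).sub ((hgrad.norm_sq ℝ).smul contDiff_id)

theorem divergence_rellichField {f : E → ℝ} (hf : ContDiff ℝ 2 f) (x : E) :
    divergence (rellichField f) x = ⟪x, ∇ f x⟫_ℝ * Δ f x + (1 - finrank ℝ E) * ‖∇ f x‖ ^ 2 -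
      fderiv ℝ (fun y => ‖∇ f y‖ ^ 2) x x / 2 := by
  have hgrad : DifferentiableAt ℝ (∇ f) x := (contDiff_gradient hf).differentiable one_ne_zero x
  have hinner : DifferentiableAt ℝ (fun y => ⟪y, ∇ f y⟫_ℝ) x := differentiableAt_id.inner ℝ hgrad
  have hnormSq : DifferentiableAt ℝ (fun y => ‖∇ f y‖ ^ 2) x := hgrad.norm_sq ℝ
  have hfderiv_inner : fderiv ℝ (fun y => ⟪y, ∇ f y⟫_ℝ) x (∇ f x) =
      ⟪fderiv ℝ (∇ f) x x, ∇ f x⟫_ℝ + ‖∇ f x‖ ^ 2 := by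
    rw [fderiv_inner_apply ℝ differentiableAt_fun_id hgrad, fderiv_fun_id, real_inner_comm,
      inner_fderiv_gradient_comm hf, ContinuousLinearMap.id_apply, real_inner_self_eq_norm_sq]
  have hfderiv_normSq : fderiv ℝ (fun y => ‖∇ f y‖ ^ 2) x x =
      2 * ⟪fderiv ℝ (∇ f) x x, ∇ f x⟫_ℝ := by
    rw [hgrad.hasFDerivAt.norm_sq.fderiv]
    simp
  rw [rellichField, divergence_sub (hinner.smul hgrad) (hnormSq.smul differentiableAt_id),
    divergence_smul hinner hgrad, divergence_smul hnormSq differentiableAt_id, divergence_id,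
    divergence_gradient hf, hfderiv_inner, id, hfderiv_normSq]
  ring

variable [MeasurableSpace E] [BorelSpace E] [Nontrivial E] (μ : Measure E) [μ.IsAddHaarMeasure]
  {f : E → ℝ} {R : ℝ}

theorem integral_toSphere_norm_gradient_sq (hR : 0 < R) (hf : ContDiff ℝ 2 f)
    (h0 : ∀ x ∈ sphere 0 R, f x = 0) :
    R ^ finrank ℝ E * ∫ ω : sphere (0 : E) 1, ‖∇ f (R • (ω : E))‖ ^ 2 ∂μ.toSphere =
      2 * ∫ x in ball 0 R, ⟪x, ∇ f x⟫_ℝ * Δ f x ∂μ +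
        (2 - finrank ℝ E) * ∫ x in ball 0 R, ‖∇ f x‖ ^ 2 ∂μ := by
  have hgrad : ContDiff ℝ 1 (∇ f) := contDiff_gradient hf
  have hnormSq : ContDiff ℝ 1 fun x => ‖∇ f x‖ ^ 2 := hgrad.norm_sq ℝ
  have hlap : Continuous (Δ f) := (contDiff_laplacian (n := 0) hf).continuous
  have hlapTerm : Continuous fun x => ⟪x, ∇ f x⟫_ℝ * Δ f x :=
    (continuous_id.inner hgrad.continuous).mul hlap
  have hradial : Continuous fun x =>
      finrank ℝ E * ‖∇ f x‖ ^ 2 + fderiv ℝ (fun y => ‖∇ f y‖ ^ 2) x x :=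
    (continuous_const.mul hnormSq.continuous).add
      ((hnormSq.continuous_fderiv one_ne_zero).clm_apply continuous_id)
  have hint {g : E → ℝ} (hg : Continuous g) : IntegrableOn g (ball 0 R) μ :=
    integrableOn_of_continuous_of_isBounded μ hg isBounded_ball
  have hdiv : ∀ x, divergence (rellichField f) x = ⟪x, ∇ f x⟫_ℝ * Δ f x +
      (1 - finrank ℝ E / 2) * ‖∇ f x‖ ^ 2 -
      1 / 2 * (finrank ℝ E * ‖∇ f x‖ ^ 2 + fderiv ℝ (fun y => ‖∇ f y‖ ^ 2) x x) := fun x => by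
    rw [divergence_rellichField hf]
    ring
  have hzero : ∫ x in ball 0 R, divergence (rellichField f) x ∂μ = 0 := by
    refine setIntegral_divergence_eq_zero μ (convex_ball 0 R) isBounded_ball
      (contDiff_rellichField hf) fun x hx => ?_
    rw [frontier_ball _ hR.ne'] at hx
    obtain ⟨c, hc⟩ :=
      exists_gradient_eq_smul_of_eq_zero_on_sphere (hf.of_le one_le_two) hR.ne' h0 hx
    exact rellichField_eq_zero_of_gradient_eq_smul hc
  simp only [hdiv] at hzero
  rw [integral_sub ((hint hlapTerm).fun_add ((hint hnormSq.continuous).const_mul _))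
      ((hint hradial).const_mul _),
    integral_add (hint hlapTerm) ((hint hnormSq.continuous).const_mul _), integral_const_mul,
    integral_const_mul, setIntegral_ball_finrank_mul_add_fderiv μ hR.le hnormSq] at hzero
  linarith

end Rellich

section Estimates

theorem setIntegral_le_mul_add_mul {X : Type*} [MeasurableSpace X] {μ : Measure X} {s : Set X}
    (hs : MeasurableSet s) {p q r : X → ℝ} {a b : ℝ} (hp : IntegrableOn p s μ)
    (hq : IntegrableOn q s μ) (hr : IntegrableOn r s μ)
    (hle : ∀ x ∈ s, p x ≤ a * q x + b * r x) :
    ∫ x in s, p x ∂μ ≤ a * ∫ x in s, q x ∂μ + b * ∫ x in s, r x ∂μ := by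
  rw [← integral_const_mul, ← integral_const_mul,
    ← integral_add (hq.const_mul a) (hr.const_mul b)]
  exact setIntegral_mono_on hp ((hq.const_mul a).add (hr.const_mul b)) hs hle

variable {E : Type*} [NormedAddCommGroup E] [InnerProductSpace ℝ E] [FiniteDimensional ℝ E]
  [MeasurableSpace E] [BorelSpace E] [Nontrivial E] (μ : Measure E) [μ.IsAddHaarMeasure]
  {f : E → ℝ} {R : ℝ}

theorem setIntegral_sq_le_setIntegral_norm_gradient_sq (hR : 0 < R) (hf : ContDiff ℝ 1 f)
    (h0 : ∀ x ∈ sphere 0 R, f x = 0) :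
    ∫ x in ball 0 R, f x ^ 2 ∂μ ≤ 4 * R ^ 2 * ∫ x in ball 0 R, ‖∇ f x‖ ^ 2 ∂μ := by
  have hgrad : Continuous (∇ f) := (contDiff_gradient (n := 0) hf).continuous
  have hsq : ContDiff ℝ 1 fun x => f x ^ 2 := hf.pow 2
  have hint {g : E → ℝ} (hg : Continuous g) : IntegrableOn g (ball 0 R) μ :=
    integrableOn_of_continuous_of_isBounded μ hg isBounded_ball
  have hradial : ∫ x in ball 0 R, (finrank ℝ E * f x ^ 2 + fderiv ℝ (fun y => f y ^ 2) x x) ∂μ =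
      0 := by
    have hboundary (ω : sphere (0 : E) 1) : f (R • (ω : E)) = 0 :=
      h0 _ (by simp [norm_smul, abs_of_pos hR])
    rw [setIntegral_ball_finrank_mul_add_fderiv μ hR.le hsq]
    simp [hboundary]
  have hpoint : ∀ x ∈ ball (0 : E) R, f x ^ 2 ≤
      2 * (finrank ℝ E * f x ^ 2 + fderiv ℝ (fun y => f y ^ 2) x x) +
        4 * R ^ 2 * ‖∇ f x‖ ^ 2 := fun x hx => by
    have hdim : (1 : ℝ) ≤ finrank ℝ E := by exact_mod_cast finrank_pos (R := ℝ) (M := E)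
    have hfderiv : fderiv ℝ (fun y => f y ^ 2) x x = 2 * f x * ⟪∇ f x, x⟫_ℝ := by
      rw [((hf.differentiable one_ne_zero x).hasFDerivAt.pow 2).fderiv]
      simp
    have hcs : ⟪∇ f x, x⟫_ℝ ^ 2 ≤ R ^ 2 * ‖∇ f x‖ ^ 2 := by
      rw [← sq_abs, ← mul_pow, mul_comm R]
      exact pow_le_pow_left₀ (abs_nonneg _) ((abs_real_inner_le_norm _ _).trans
        (mul_le_mul_of_nonneg_left (mem_ball_zero_iff.1 hx).le (norm_nonneg _))) 2
    rw [hfderiv]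
    nlinarith [sq_nonneg (f x + 2 * ⟪∇ f x, x⟫_ℝ),
      mul_le_mul_of_nonneg_right hdim (sq_nonneg (f x))]
  have hle := setIntegral_le_mul_add_mul measurableSet_ball (hint hsq.continuous)
    (hint ((continuous_const.mul hsq.continuous).add
      ((hsq.continuous_fderiv one_ne_zero).clm_apply continuous_id)))
    (hint (hgrad.norm.pow 2)) hpoint
  simpa only [Pi.add_apply, Pi.mul_apply, Pi.pow_apply, id, hradial, mul_zero, zero_add] using hle

theorem setIntegral_norm_gradient_sq_le_setIntegral_laplacian_sq (hR : 0 < R) (hf : ContDiff ℝ 2 f)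
    (h0 : ∀ x ∈ sphere 0 R, f x = 0) :
    ∫ x in ball 0 R, ‖∇ f x‖ ^ 2 ∂μ ≤ 4 * R ^ 2 * ∫ x in ball 0 R, Δ f x ^ 2 ∂μ := by
  have hlap : Continuous (Δ f) := (contDiff_laplacian (n := 0) hf).continuous
  have hint {g : E → ℝ} (hg : Continuous g) : IntegrableOn g (ball 0 R) μ :=
    integrableOn_of_continuous_of_isBounded μ hg isBounded_ball
  have hgreen : ∫ x in ball 0 R, ‖∇ f x‖ ^ 2 ∂μ = ∫ x in ball 0 R, -(f x * Δ f x) ∂μ := by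
    rw [integral_neg, ← setIntegral_inner_gradient μ (convex_ball 0 R) isBounded_ball
      (hf.of_le one_le_two) hf (by rwa [frontier_ball _ hR.ne'])]
    simp only [real_inner_self_eq_norm_sq]
  have hpoint (x : E) : -(f x * Δ f x) ≤ 1 / (8 * R ^ 2) * f x ^ 2 + 2 * R ^ 2 * Δ f x ^ 2 := by
    have hsq : 1 / (8 * R ^ 2) * f x ^ 2 + 2 * R ^ 2 * Δ f x ^ 2 + f x * Δ f x =
        (f x + 4 * R ^ 2 * Δ f x) ^ 2 / (8 * R ^ 2) := by
      field_simp
      ring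
    have : 0 ≤ (f x + 4 * R ^ 2 * Δ f x) ^ 2 / (8 * R ^ 2) := by positivity
    linarith
  have hpoincare : 1 / (8 * R ^ 2) * ∫ x in ball 0 R, f x ^ 2 ∂μ ≤
      1 / 2 * ∫ x in ball 0 R, ‖∇ f x‖ ^ 2 ∂μ := by
    rw [one_div_mul_eq_div, div_le_iff₀ (by positivity)]
    linarith [setIntegral_sq_le_setIntegral_norm_gradient_sq μ hR (hf.of_le one_le_two) h0]
  have hbound := setIntegral_le_mul_add_mul measurableSet_ball (hint (hf.continuous.mul hlap).neg)
    (hint (hf.continuous.pow 2)) (hint (hlap.pow 2)) fun x _ => hpoint x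
  simp only [Pi.pow_apply, Pi.neg_apply, Pi.mul_apply, ← hgreen] at hbound
  linarith

theorem integral_toSphere_norm_gradient_sq_le (hR : 0 < R) (hf : ContDiff ℝ 2 f)
    (h0 : ∀ x ∈ sphere 0 R, f x = 0) :
    R ^ finrank ℝ E * ∫ ω : sphere (0 : E) 1, ‖∇ f (R • (ω : E))‖ ^ 2 ∂μ.toSphere ≤
      9 * R ^ 2 * ∫ x in ball 0 R, Δ f x ^ 2 ∂μ := by
  have hgrad : Continuous (∇ f) := (contDiff_gradient (n := 1) hf).continuous
  have hlap : Continuous (Δ f) := (contDiff_laplacian (n := 0) hf).continuous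
  have hint {g : E → ℝ} (hg : Continuous g) : IntegrableOn g (ball 0 R) μ :=
    integrableOn_of_continuous_of_isBounded μ hg isBounded_ball
  have hdim : (1 : ℝ) ≤ finrank ℝ E := by exact_mod_cast finrank_pos (R := ℝ) (M := E)
  have hpoint : ∀ x ∈ ball (0 : E) R,
      ⟪x, ∇ f x⟫_ℝ * Δ f x ≤ 1 / 2 * ‖∇ f x‖ ^ 2 + R ^ 2 / 2 * Δ f x ^ 2 := fun x hx => by
    have hcs : |⟪x, ∇ f x⟫_ℝ| ≤ R * ‖∇ f x‖ :=
      (abs_real_inner_le_norm _ _).trans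
        (mul_le_mul_of_nonneg_right (mem_ball_zero_iff.1 hx).le (norm_nonneg _))
    calc ⟪x, ∇ f x⟫_ℝ * Δ f x ≤ |⟪x, ∇ f x⟫_ℝ| * |Δ f x| := by
          rw [← abs_mul]
          exact le_abs_self _
      _ ≤ R * ‖∇ f x‖ * |Δ f x| := by gcongr
      _ ≤ 1 / 2 * ‖∇ f x‖ ^ 2 + R ^ 2 / 2 * Δ f x ^ 2 := by
          rw [← sq_abs (Δ f x)]
          linarith [sq_nonneg (‖∇ f x‖ - R * |Δ f x|)]
  have hbulk := setIntegral_le_mul_add_mul measurableSet_ball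
    (hint ((continuous_id.inner hgrad).mul hlap)) (hint (hgrad.norm.pow 2)) (hint (hlap.pow 2))
    hpoint
  simp only [Pi.pow_apply, Pi.mul_apply, id] at hbulk
  have hgrad_nonneg : 0 ≤ ∫ x in ball 0 R, ‖∇ f x‖ ^ 2 ∂μ := integral_nonneg fun x => sq_nonneg _
  have hgrad_le := setIntegral_norm_gradient_sq_le_setIntegral_laplacian_sq μ hR hf h0
  rw [integral_toSphere_norm_gradient_sq μ hR hf h0]
  linarith [mul_le_mul_of_nonneg_right hdim hgrad_nonneg]

end Estimates

section HausdorffMeasure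

theorem exists_finset_isSeparated_isCover {X : Type*} [PseudoEMetricSpace X] {K : Set X}
    (hK : IsCompact K) {ε : ℝ≥0} (hε : ε ≠ 0) :
    ∃ t : Finset X, (t : Set X) ⊆ K ∧ IsSeparated ε (t : Set X) ∧ IsCover ε K (t : Set X) := by
  have hpacking : packingNumber ε K ≠ ⊤ := by
    obtain ⟨N, -, hN, hcover⟩ :=
      exists_finite_isCover_of_isCompact (div_ne_zero hε two_ne_zero) hK
    rw [← mul_div_cancel₀ ε two_ne_zero]
    exact ne_top_of_le_ne_top (encard_ne_top_iff.2 hN)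
      ((packingNumber_two_mul_le_externalCoveringNumber _ K).trans
        hcover.externalCoveringNumber_le_encard)
  have hfinite : (maximalSeparatedSet ε K).Finite := by
    rwa [← encard_ne_top_iff, encard_maximalSeparatedSet hpacking]
  refine ⟨hfinite.toFinset, ?_, ?_, ?_⟩ <;> rw [hfinite.coe_toFinset]
  exacts [maximalSeparatedSet_subset, isSeparated_maximalSeparatedSet,
    isCover_maximalSeparatedSet hpacking]

theorem ediam_closedBall_le_ofReal {X : Type*} [PseudoMetricSpace X] (x : X) {δ : ℝ}
    (hδ : 0 ≤ δ) : ediam (closedBall x δ) ≤ ENNReal.ofReal (2 * δ) := by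
  rw [← closedEBall_ofReal hδ, ENNReal.ofReal_mul zero_le_two, ENNReal.ofReal_ofNat]
  exact ediam_closedEBall_le

variable {X : Type*} [MetricSpace X] [MeasurableSpace X] [BorelSpace X] {ν : Measure X}
  {d r₀ : ℝ} {c : ℝ≥0∞}

theorem exists_finset_sum_ediam_rpow_le {K : Set X} (hK : IsCompact K) (hd : 0 ≤ d) {δ : ℝ}
    (hδ : 0 < δ) (hν : ∀ x ∈ K, ENNReal.ofReal ((δ / 2) ^ d) ≤ c * ν (ball x (δ / 2))) :
    ∃ t : Finset X, K ⊆ ⋃ x : t, closedBall (x : X) δ ∧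
      ∑ x : t, ediam (closedBall (x : X) δ) ^ d ≤
        ENNReal.ofReal (4 ^ d) * c * ν (thickening δ K) := by
  obtain ⟨t, htK, hsep, hcover⟩ := exists_finset_isSeparated_isCover hK
    (Real.toNNReal_pos.2 hδ).ne'
  have hdisj : (t : Set X).PairwiseDisjoint fun x => ball x (δ / 2) := fun x hx y hy hxy => by
    have hlt : δ < dist x y := by
      have hlt : ENNReal.ofReal δ < edist x y := hsep hx hy hxy
      rwa [edist_dist, ENNReal.ofReal_lt_ofReal_iff_of_nonneg hδ.le] at hlt
    exact ball_disjoint_ball (by linarith)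
  have hsub : ⋃ x ∈ t, ball x (δ / 2) ⊆ thickening δ K := iUnion₂_subset fun x hx =>
    (ball_subset_thickening (htK hx) _).trans (thickening_mono (half_le_self hδ.le) _)
  refine ⟨t, ?_, ?_⟩
  · rw [iUnion_subtype]
    simpa [Real.coe_toNNReal _ hδ.le] using hcover.subset_iUnion_closedBall
  calc ∑ x : t, ediam (closedBall (x : X) δ) ^ d
      = ∑ x ∈ t, ediam (closedBall x δ) ^ d :=
        Finset.sum_coe_sort t fun x => ediam (closedBall x δ) ^ d
    _ ≤ ∑ x ∈ t, ENNReal.ofReal (4 ^ d) * (c * ν (ball x (δ / 2))) := by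
        refine Finset.sum_le_sum fun x hx => ?_
        calc ediam (closedBall x δ) ^ d ≤ ENNReal.ofReal (2 * δ) ^ d :=
              ENNReal.rpow_le_rpow (ediam_closedBall_le_ofReal x hδ.le) hd
          _ = ENNReal.ofReal (4 ^ d) * ENNReal.ofReal ((δ / 2) ^ d) := by
              rw [ENNReal.ofReal_rpow_of_nonneg (by positivity) hd,
                ← ENNReal.ofReal_mul (by positivity),
                ← Real.mul_rpow (by positivity) (by positivity)]
              ring_nf
          _ ≤ _ := by gcongr; exact hν x (htK hx)
    _ = ENNReal.ofReal (4 ^ d) * c * ν (⋃ x ∈ t, ball x (δ / 2)) := by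
        rw [measure_biUnion_finset hdisj fun _ _ => measurableSet_ball, Finset.mul_sum]
        simp only [mul_assoc]
    _ ≤ ENNReal.ofReal (4 ^ d) * c * ν (thickening δ K) := by gcongr

theorem hausdorffMeasure_le_of_isCompact [IsFiniteMeasure ν] {K : Set X} (hK : IsCompact K)
    (hd : 0 ≤ d) (hc : c ≠ ⊤) (hr₀ : 0 < r₀)
    (hν : ∀ x ∈ K, ∀ r ∈ Ioo 0 r₀, ENNReal.ofReal (r ^ d) ≤ c * ν (ball x r)) :
    μH[d] K ≤ ENNReal.ofReal (4 ^ d) * c * ν K := by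
  choose! t hcover hsum using fun δ (hδ : δ ∈ Ioo 0 r₀) =>
    exists_finset_sum_ediam_rpow_le hK hd hδ.1 fun x hx =>
      hν x hx (δ / 2) ⟨half_pos hδ.1, (half_lt_self hδ.1).trans hδ.2⟩
  have hsmall : ∀ᶠ δ in 𝓝[>] (0 : ℝ), δ ∈ Ioo 0 r₀ := Ioo_mem_nhdsGT hr₀
  have hdiam : Tendsto (fun δ : ℝ => ENNReal.ofReal (2 * δ)) (𝓝[>] 0) (𝓝 0) := by
    have : Continuous fun δ : ℝ => ENNReal.ofReal (2 * δ) :=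
      ENNReal.continuous_ofReal.comp (continuous_const_mul 2)
    simpa using (this.tendsto 0).mono_left nhdsWithin_le_nhds
  have hlim : Tendsto (fun δ : ℝ => ENNReal.ofReal (4 ^ d) * c * ν (thickening δ K)) (𝓝[>] 0)
      (𝓝 (ENNReal.ofReal (4 ^ d) * c * ν K)) :=
    ENNReal.Tendsto.const_mul (tendsto_measure_thickening_of_isClosed
      ⟨1, one_pos, measure_ne_top _ _⟩ hK.isClosed) (.inr (by finiteness))
  calc μH[d] K ≤ liminf (fun δ => ∑ x : t δ, ediam (closedBall (x : X) δ) ^ d) (𝓝[>] 0) :=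
        Measure.hausdorffMeasure_le_liminf_sum (ι := fun δ => t δ) d K _ hdiam
          (fun δ x => closedBall (x : X) δ)
          (hsmall.mono fun δ hδ x => ediam_closedBall_le_ofReal (x : X) hδ.1.le)
          (hsmall.mono fun δ hδ => hcover δ hδ)
    _ ≤ liminf (fun δ => ENNReal.ofReal (4 ^ d) * c * ν (thickening δ K)) (𝓝[>] 0) :=
        liminf_le_liminf (hsmall.mono hsum)
    _ = ENNReal.ofReal (4 ^ d) * c * ν K := hlim.liminf_eq

theorem hausdorffMeasure_le_smul [CompactSpace X] [IsFiniteMeasure ν] (hd : 0 ≤ d) (hc : c ≠ ⊤)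
    (hr₀ : 0 < r₀) (hν : ∀ x, ∀ r ∈ Ioo 0 r₀, ENNReal.ofReal (r ^ d) ≤ c * ν (ball x r)) :
    μH[d] ≤ (ENNReal.ofReal (4 ^ d) * c) • ν := by
  have hcompact {K : Set X} (hK : IsCompact K) : μH[d] K ≤ ENNReal.ofReal (4 ^ d) * c * ν K :=
    hausdorffMeasure_le_of_isCompact hK hd hc hr₀ fun x _ => hν x
  have : IsFiniteMeasure (μH[d] : Measure X) :=
    ⟨(hcompact isCompact_univ).trans_lt (by finiteness)⟩
  refine Measure.le_iff.2 fun s hs => ?_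
  rw [hs.measure_eq_iSup_isCompact_of_ne_top (measure_ne_top _ s)]
  exact iSup₂_le fun K hKs => iSup_le fun hK => (hcompact hK).trans (by
    rw [Measure.smul_apply, smul_eq_mul]
    gcongr)

end HausdorffMeasure

section SurfaceMeasure

theorem volumeIoiPow_le {n : ℕ} {b : ℝ} {s : Set (Ioi (0 : ℝ))}
    (hs : MeasurableSet s) (hsb : ∀ r ∈ s, (r : ℝ) ≤ b) :
    Measure.volumeIoiPow n s ≤ ENNReal.ofReal (b ^ n) * volume ((↑) '' s : Set ℝ) := by
  rw [← comap_subtype_coe_apply measurableSet_Ioi volume s, Measure.volumeIoiPow,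
    withDensity_apply _ hs]
  calc ∫⁻ r in s, ENNReal.ofReal ((r : ℝ) ^ n) ∂Measure.comap Subtype.val volume
      ≤ ∫⁻ _ in s, ENNReal.ofReal (b ^ n) ∂Measure.comap Subtype.val volume :=
        setLIntegral_mono measurable_const fun r hr =>
          ENNReal.ofReal_le_ofReal (pow_le_pow_left₀ (le_of_lt r.2) (hsb r hr) n)
    _ = _ := setLIntegral_const _ _

theorem volumeIoiPow_setOf_abs_sub_one_lt_le (n : ℕ) {r : ℝ} (hr : r ≤ 2) :
    Measure.volumeIoiPow n {t | |(t : ℝ) - 1| < r / 2} ≤ ENNReal.ofReal (2 ^ n * r) := by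
  have hmeas : MeasurableSet {t : Ioi (0 : ℝ) | |(t : ℝ) - 1| < r / 2} :=
    measurableSet_lt (by fun_prop) measurable_const
  have himage : ((↑) '' {t : Ioi (0 : ℝ) | |(t : ℝ) - 1| < r / 2} : Set ℝ) ⊆ ball 1 (r / 2) :=
    image_subset_iff.2 fun t ht => ht
  calc Measure.volumeIoiPow n {t | |(t : ℝ) - 1| < r / 2}
      ≤ ENNReal.ofReal (2 ^ n) *
          volume ((↑) '' {t : Ioi (0 : ℝ) | |(t : ℝ) - 1| < r / 2} : Set ℝ) :=
        volumeIoiPow_le hmeas fun t ht => by linarith [(abs_lt.1 (mem_ofPred.1 ht)).2]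
    _ ≤ ENNReal.ofReal (2 ^ n) * volume (ball (1 : ℝ) (r / 2)) := by gcongr
    _ = ENNReal.ofReal (2 ^ n * r) := by
        rw [Real.volume_ball, mul_div_cancel₀ r two_ne_zero, ENNReal.ofReal_mul (by positivity)]

variable {E : Type*} [NormedAddCommGroup E] [NormedSpace ℝ E]

theorem dist_inv_norm_smul_lt {ω x : E} {r : ℝ} (hω : ‖ω‖ = 1) (hx : x ≠ 0)
    (hdist : dist x ω < r / 2) : dist (‖x‖⁻¹ • x) ω < r := by
  have hx0 : ‖x‖ ≠ 0 := norm_ne_zero_iff.2 hx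
  have hradial : dist (‖x‖⁻¹ • x) x = |‖x‖ - 1| := by
    have hsub : ‖x‖⁻¹ • x - x = ((1 - ‖x‖) * ‖x‖⁻¹) • x := by
      rw [sub_mul, one_mul, mul_inv_cancel₀ hx0, sub_smul, one_smul]
    rw [dist_eq_norm, hsub, norm_smul, norm_mul, norm_inv, norm_norm, mul_assoc,
      inv_mul_cancel₀ hx0, mul_one, Real.norm_eq_abs, abs_sub_comm]
  have hnorm : |‖x‖ - 1| ≤ dist x ω := by
    rw [← hω, dist_eq_norm]
    exact abs_norm_sub_norm_le x ω
  linarith [dist_triangle (‖x‖⁻¹ • x) x ω]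

variable [FiniteDimensional ℝ E] [MeasurableSpace E] [BorelSpace E]
  (μ : Measure E) [μ.IsAddHaarMeasure]

theorem measure_ball_le_toSphere_ball_mul_volumeIoiPow (ω : sphere (0 : E) 1) {r : ℝ} (hr : r ≤ 2) :
    μ (ball (ω : E) (r / 2)) ≤ μ.toSphere (ball ω r) *
      Measure.volumeIoiPow (finrank ℝ E - 1) {t | |(t : ℝ) - 1| < r / 2} := by
  have hω : ‖(ω : E)‖ = 1 := norm_eq_of_mem_sphere ω
  rw [← Measure.prod_prod, ← μ.measurePreserving_homeomorphUnitSphereProd.measure_preimage_emb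
    (homeomorphUnitSphereProd E).measurableEmbedding,
    comap_subtype_coe_apply (measurableSet_singleton (0 : E)).compl]
  refine measure_mono fun x hx => ?_
  have hx0 : x ≠ 0 := by
    rintro rfl
    rw [mem_ball, dist_zero_left, hω] at hx
    linarith
  refine ⟨⟨x, hx0⟩, ⟨?_, ?_⟩, rfl⟩
  · rw [mem_ball, Subtype.dist_eq, homeomorphUnitSphereProd_apply_fst_coe]
    exact dist_inv_norm_smul_lt hω hx0 hx
  · rw [mem_ofPred, homeomorphUnitSphereProd_apply_snd_coe, ← hω]
    rw [mem_ball, dist_eq_norm] at hx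
    exact (abs_norm_sub_norm_le x ω).trans_lt hx

theorem pow_mul_measure_ball_le_toSphere_ball (ω : sphere (0 : E) 1) {r : ℝ} (hr₀ : 0 < r)
    (hr : r ≤ 2) :
    ENNReal.ofReal (r ^ (finrank ℝ E - 1)) * μ (ball 0 1) ≤
      ENNReal.ofReal (2 ^ (2 * finrank ℝ E - 1)) * μ.toSphere (ball ω r) := by
  obtain ⟨k, hk⟩ := Nat.exists_eq_succ_of_ne_zero
    (finrank_pos_iff_exists_ne_zero (R := ℝ).2 ⟨(ω : E), ne_zero_of_mem_unit_sphere ω⟩).ne'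
  have hball : ENNReal.ofReal ((r / 2) ^ (k + 1)) * μ (ball 0 1) ≤
      μ.toSphere (ball ω r) * ENNReal.ofReal (2 ^ k * r) := by
    have h := measure_ball_le_toSphere_ball_mul_volumeIoiPow μ ω hr
    rw [Measure.addHaar_ball_of_pos μ _ (half_pos hr₀), hk, Nat.succ_sub_one] at h
    grw [h, volumeIoiPow_setOf_abs_sub_one_lt_le k hr]
  have hpow : (2 : ℝ) ^ (k + 1) / r * (r / 2) ^ (k + 1) = r ^ k := by
    rw [div_pow, pow_succ r]
    field_simp
  have hconst : (2 : ℝ) ^ (k + 1) / r * (2 ^ k * r) = 2 ^ (2 * (k + 1) - 1) := by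
    rw [show 2 * (k + 1) - 1 = k + 1 + k by lia, pow_add 2 (k + 1) k]
    field_simp
  calc ENNReal.ofReal (r ^ (finrank ℝ E - 1)) * μ (ball 0 1)
      = ENNReal.ofReal (2 ^ (k + 1) / r) *
          (ENNReal.ofReal ((r / 2) ^ (k + 1)) * μ (ball 0 1)) := by
        rw [hk, Nat.succ_sub_one, ← mul_assoc, ← ENNReal.ofReal_mul (by positivity), hpow]
    _ ≤ ENNReal.ofReal (2 ^ (k + 1) / r) *
          (μ.toSphere (ball ω r) * ENNReal.ofReal (2 ^ k * r)) := by
        grw [hball]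
    _ = ENNReal.ofReal (2 ^ (2 * finrank ℝ E - 1)) * μ.toSphere (ball ω r) := by
        rw [hk, Nat.succ_eq_add_one, ← hconst,
          ENNReal.ofReal_mul (p := 2 ^ (k + 1) / r) (by positivity)]
        ring

theorem exists_hausdorffMeasure_le_smul_toSphere [Nontrivial E] :
    ∃ c : ℝ≥0∞, c ≠ ⊤ ∧
      (μH[(finrank ℝ E : ℝ) - 1] : Measure (sphere (0 : E) 1)) ≤ c • μ.toSphere := by
  have hball : μ (ball (0 : E) 1) ≠ 0 := (measure_ball_pos μ 0 one_pos).ne'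
  have hdim : (finrank ℝ E : ℝ) - 1 = (finrank ℝ E - 1 : ℕ) := by
    rw [Nat.cast_sub (finrank_pos (R := ℝ) (M := E)), Nat.cast_one]
  refine ⟨_, by finiteness, hausdorffMeasure_le_smul
    (c := ENNReal.ofReal (2 ^ (2 * finrank ℝ E - 1)) / μ (ball 0 1))
    (hdim ▸ Nat.cast_nonneg _) (by finiteness) one_pos fun ω r hr => ?_⟩
  rw [hdim, Real.rpow_natCast, ← ENNReal.mul_div_right_comm,
    ENNReal.le_div_iff_mul_le (.inl hball) (.inl (by finiteness))]
  exact pow_mul_measure_ball_le_toSphere_ball μ ω hr.1 (hr.2.le.trans one_le_two)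

theorem exists_hausdorffMeasure_restrict_sphere_le [Nontrivial E] {R : ℝ} (hR : 0 < R) :
    ∃ c : ℝ≥0∞, c ≠ ⊤ ∧ (μH[(finrank ℝ E : ℝ) - 1]).restrict (sphere (0 : E) R) ≤
      c • μ.toSphere.map fun ω : sphere (0 : E) 1 => R • (ω : E) := by
  set d : ℝ := (finrank ℝ E : ℝ) - 1
  have hd : 0 ≤ d := sub_nonneg.2 (by exact_mod_cast finrank_pos (R := ℝ) (M := E))
  obtain ⟨c, hc, hle⟩ := exists_hausdorffMeasure_le_smul_toSphere μ
  have hlip : LipschitzWith ‖R‖₊ fun ω : sphere (0 : E) 1 => R • (ω : E) := by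
    simpa [Function.comp_def] using
      (lipschitzWith_smul R).comp (LipschitzWith.subtype_val (sphere (0 : E) 1))
  refine ⟨(‖R‖₊ : ℝ≥0∞) ^ d * c, by finiteness, Measure.le_iff.2 fun s hs => ?_⟩
  have hsub : s ∩ sphere (0 : E) R ⊆
      (fun ω : sphere (0 : E) 1 => R • (ω : E)) '' ((fun ω => R • (ω : E)) ⁻¹' s) := by
    rintro x ⟨hxs, hx⟩
    have hunit : R⁻¹ • x ∈ sphere (0 : E) 1 := by
      rw [mem_sphere_zero_iff_norm] at hx ⊢
      rw [norm_smul, norm_inv, Real.norm_of_nonneg hR.le, hx, inv_mul_cancel₀ hR.ne']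
    have hx' : R • R⁻¹ • x = x := smul_inv_smul₀ hR.ne' x
    exact ⟨⟨R⁻¹ • x, hunit⟩, by simpa only [mem_preimage, hx'] using hxs, hx'⟩
  rw [Measure.restrict_apply hs, Measure.smul_apply,
    Measure.map_apply hlip.continuous.measurable hs, smul_eq_mul, mul_assoc]
  calc μH[d] (s ∩ sphere 0 R) ≤ μH[d] ((fun ω : sphere (0 : E) 1 => R • (ω : E)) ''
        ((fun ω => R • (ω : E)) ⁻¹' s)) := measure_mono hsub
    _ ≤ (‖R‖₊ : ℝ≥0∞) ^ d * μH[d] ((fun ω : sphere (0 : E) 1 => R • (ω : E)) ⁻¹' s) :=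
        hlip.hausdorffMeasure_image_le hd _
    _ ≤ _ := by
        gcongr
        exact hle _

theorem exists_setIntegral_sphere_le_mul_integral_toSphere [Nontrivial E] {R : ℝ} (hR : 0 < R) :
    ∃ C : ℝ, 0 ≤ C ∧ ∀ g : E → ℝ, Continuous g → (∀ x, 0 ≤ g x) →
      ∫ x in sphere 0 R, g x ∂μH[(finrank ℝ E : ℝ) - 1] ≤
        C * ∫ ω : sphere (0 : E) 1, g (R • (ω : E)) ∂μ.toSphere := by
  obtain ⟨c, hc, hle⟩ := exists_hausdorffMeasure_restrict_sphere_le μ hR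
  refine ⟨c.toReal, ENNReal.toReal_nonneg, fun g hg hg0 => ?_⟩
  have hdil : Continuous fun ω : sphere (0 : E) 1 => R • (ω : E) := by fun_prop
  have hint : Integrable g (μ.toSphere.map fun ω : sphere (0 : E) 1 => R • (ω : E)) := by
    rw [integrable_map_measure hg.aestronglyMeasurable hdil.aemeasurable]
    exact (hg.comp hdil).integrable_of_hasCompactSupport (.of_compactSpace _)
  rw [← smul_eq_mul, ← integral_map hdil.aemeasurable hg.aestronglyMeasurable,
    ← integral_smul_measure]
  exact integral_mono_measure hle (.of_forall hg0) (hint.smul_measure hc)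

end SurfaceMeasure

section NavierProblem

variable {E : Type*} [NormedAddCommGroup E] [InnerProductSpace ℝ E] [FiniteDimensional ℝ E]
  [MeasurableSpace E] [BorelSpace E] (μ : Measure E) [μ.IsAddHaarMeasure] {R : ℝ}

theorem exists_setIntegral_sphere_fderiv_sq_le [Nontrivial E] (hR : 0 < R) :
    ∃ C > 0, ∀ f : E → ℝ, ContDiff ℝ 2 f → (∀ x ∈ sphere 0 R, f x = 0) →
      ∫ x in sphere 0 R, fderiv ℝ f x (R⁻¹ • x) ^ 2 ∂μH[(finrank ℝ E : ℝ) - 1] ≤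
        C * ∫ x in ball 0 R, Δ f x ^ 2 ∂μ := by
  obtain ⟨C, hC, hsphere⟩ := exists_setIntegral_sphere_le_mul_integral_toSphere μ hR
  refine ⟨C * (9 * R ^ 2 / R ^ finrank ℝ E) + 1, by positivity, fun f hf h0 => ?_⟩
  have hnormal : Continuous fun x => fderiv ℝ f x (R⁻¹ • x) ^ 2 :=
    ((hf.continuous_fderiv two_ne_zero).clm_apply (continuous_const_smul R⁻¹)).pow 2
  have hgrad : Continuous (∇ f) := (contDiff_gradient (n := 1) hf).continuous
  have hdil : Continuous fun ω : sphere (0 : E) 1 => R • (ω : E) := by fun_prop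
  have hint {g : E → ℝ} (hg : Continuous g) :
      Integrable (fun ω : sphere (0 : E) 1 => g (R • (ω : E))) μ.toSphere :=
    (hg.comp hdil).integrable_of_hasCompactSupport (.of_compactSpace _)
  have hpoint (ω : sphere (0 : E) 1) :
      fderiv ℝ f (R • (ω : E)) (R⁻¹ • R • (ω : E)) ^ 2 ≤ ‖∇ f (R • (ω : E))‖ ^ 2 := by
    rw [inv_smul_smul₀ hR.ne', ← inner_gradient_left, ← sq_abs]
    gcongr
    simpa using abs_real_inner_le_norm (∇ f (R • (ω : E))) ω
  have hnonneg : 0 ≤ ∫ x in ball 0 R, Δ f x ^ 2 ∂μ := integral_nonneg fun x => sq_nonneg _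
  calc ∫ x in sphere 0 R, fderiv ℝ f x (R⁻¹ • x) ^ 2 ∂μH[(finrank ℝ E : ℝ) - 1]
      ≤ C * ∫ ω : sphere (0 : E) 1, fderiv ℝ f (R • (ω : E)) (R⁻¹ • R • (ω : E)) ^ 2 ∂μ.toSphere :=
        hsphere _ hnormal fun x => sq_nonneg _
    _ ≤ C * ∫ ω : sphere (0 : E) 1, ‖∇ f (R • (ω : E))‖ ^ 2 ∂μ.toSphere := by
        gcongr
        exacts [hint hnormal, hint (g := fun x => ‖∇ f x‖ ^ 2) (hgrad.norm.pow 2), hpoint]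
    _ ≤ C * (9 * R ^ 2 / R ^ finrank ℝ E * ∫ x in ball 0 R, Δ f x ^ 2 ∂μ) := by
        gcongr
        rw [div_mul_eq_mul_div, le_div_iff₀' (by positivity)]
        exact integral_toSphere_norm_gradient_sq_le μ hR hf h0
    _ ≤ (C * (9 * R ^ 2 / R ^ finrank ℝ E) + 1) * ∫ x in ball 0 R, Δ f x ^ 2 ∂μ := by
        linarith

theorem setIntegral_laplacian_sq_le {u : E → ℝ} {K : ℝ} (hR : 0 < R) (hu : ContDiff ℝ 4 u)
    (hK : ∀ x ∈ ball 0 R, |Δ (Δ u) x| ≤ K * |u x|) (h0 : ∀ x ∈ sphere 0 R, u x = 0)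
    (h1 : ∀ x ∈ sphere 0 R, Δ u x = 0) :
    ∫ x in ball 0 R, Δ u x ^ 2 ∂μ ≤ K * ∫ x in ball 0 R, u x ^ 2 ∂μ := by
  have hlap : ContDiff ℝ 2 (Δ u) := contDiff_laplacian hu
  have hbilap : Continuous (Δ (Δ u)) := (contDiff_laplacian (n := 0) hlap).continuous
  calc ∫ x in ball 0 R, Δ u x ^ 2 ∂μ = ∫ x in ball 0 R, u x * Δ (Δ u) x ∂μ := by
        rw [← frontier_ball (0 : E) hR.ne'] at h0 h1
        simp only [sq]
        exact (setIntegral_mul_laplacian_comm μ (convex_ball 0 R) isBounded_ball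
          (hu.of_le (by norm_num)) hlap h0 h1).symm
    _ ≤ ∫ x in ball 0 R, K * u x ^ 2 ∂μ := by
        refine setIntegral_mono_on
          (integrableOn_of_continuous_of_isBounded μ (hu.continuous.mul hbilap) isBounded_ball)
          (integrableOn_of_continuous_of_isBounded μ (by fun_prop) isBounded_ball)
          measurableSet_ball fun x hx => ?_
        calc u x * Δ (Δ u) x ≤ |u x| * |Δ (Δ u) x| := (le_abs_self _).trans_eq (abs_mul _ _)
          _ ≤ |u x| * (K * |u x|) := by grw [hK x hx]
          _ = K * u x ^ 2 := by rw [← sq_abs (u x)]; ring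
    _ = K * ∫ x in ball 0 R, u x ^ 2 ∂μ := integral_const_mul _ _

theorem setIntegral_sq_le_of_abs_le {f g : E → ℝ} {K : ℝ} (hf : Continuous f) (hg : Continuous g)
    (hK : ∀ x ∈ ball 0 R, |f x| ≤ K * |g x|) :
    ∫ x in ball 0 R, f x ^ 2 ∂μ ≤ K ^ 2 * ∫ x in ball 0 R, g x ^ 2 ∂μ := by
  rw [← integral_const_mul]
  refine setIntegral_mono_on
    (integrableOn_of_continuous_of_isBounded μ (hf.pow 2) isBounded_ball)
    (integrableOn_of_continuous_of_isBounded μ (by fun_prop) isBounded_ball)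
    measurableSet_ball fun x hx => ?_
  rw [← sq_abs (f x), ← sq_abs (g x), ← mul_pow]
  exact pow_le_pow_left₀ (abs_nonneg _) (hK x hx) 2

theorem exists_setIntegral_sphere_fderiv_sq_le_of_abs_laplacian_laplacian_le [Nontrivial E]
    (hR : 0 < R) :
    ∃ C > 0, ∀ (u : E → ℝ) (K : ℝ), ContDiff ℝ 4 u →
      (∀ x ∈ ball 0 R, |Δ (Δ u) x| ≤ K * |u x|) →
      (∀ x ∈ sphere 0 R, u x = 0) → (∀ x ∈ sphere 0 R, Δ u x = 0) →
      ∫ x in sphere 0 R, fderiv ℝ u x (R⁻¹ • x) ^ 2 ∂μH[(finrank ℝ E : ℝ) - 1] ≤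
          C * K * ∫ x in ball 0 R, u x ^ 2 ∂μ ∧
        ∫ x in sphere 0 R, fderiv ℝ (Δ u) x (R⁻¹ • x) ^ 2 ∂μH[(finrank ℝ E : ℝ) - 1] ≤
          C * K ^ 2 * ∫ x in ball 0 R, u x ^ 2 ∂μ := by
  obtain ⟨C, hC, hboundary⟩ := exists_setIntegral_sphere_fderiv_sq_le μ hR
  refine ⟨C, hC, fun u K hu hK h0 h1 => ?_⟩
  have hlap : ContDiff ℝ 2 (Δ u) := contDiff_laplacian hu
  rw [mul_assoc, mul_assoc]
  refine ⟨(hboundary u (hu.of_le (by norm_num)) h0).trans ?_, (hboundary (Δ u) hlap h1).trans ?_⟩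
  · gcongr
    exact setIntegral_laplacian_sq_le μ hR hu hK h0 h1
  · gcongr
    exact setIntegral_sq_le_of_abs_le μ (contDiff_laplacian (n := 0) hlap).continuous
      hu.continuous hK

end NavierProblem

theorem lapR_eq_laplacian (n : ℕ) (f : EuclideanSpace ℝ (Fin n) → ℝ) : lapR n f = Δ f := by
  funext x
  simp [lapR, laplacian_eq_iteratedFDeriv_orthonormalBasis f (EuclideanSpace.basisFun (Fin n) ℝ),
    iteratedFDeriv_two_apply]

theorem stmt1_general {n : ℕ} (hn : n ≠ 0) {R : ℝ} (hR : 0 < R) :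
    ∃ C > 0, ∀ (V : EuclideanSpace ℝ (Fin n) → ℝ) (lam : ℝ), (∀ x ∈ ball 0 R, |V x| ≤ lam) →
      ∀ u : EuclideanSpace ℝ (Fin n) → ℝ, ContDiff ℝ 4 u →
      (∀ x ∈ ball 0 R, lapR n (lapR n u) x + V x * u x = lam * u x) →
      (∀ x ∈ sphere 0 R, u x = 0) → (∀ x ∈ sphere 0 R, lapR n u x = 0) →
      ∫ x in sphere 0 R, normalDerivR n R u x ^ 2 ∂μH[(n : ℝ) - 1] ≤
          C * lam * ∫ x in ball 0 R, u x ^ 2 ∧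
        ∫ x in sphere 0 R, normalDerivR n R (lapR n u) x ^ 2 ∂μH[(n : ℝ) - 1] ≤
          C * lam ^ 2 * ∫ x in ball 0 R, u x ^ 2 := by
  have : NeZero n := ⟨hn⟩
  obtain ⟨C, hC, h⟩ := exists_setIntegral_sphere_fderiv_sq_le_of_abs_laplacian_laplacian_le
    (volume : Measure (EuclideanSpace ℝ (Fin n))) hR
  refine ⟨4 * C, by positivity, fun V lam hV u hu heq h0 h1 => ?_⟩
  have hlam : 0 ≤ lam := (abs_nonneg _).trans (hV 0 (mem_ball_self hR))
  have hu2 : 0 ≤ C * lam * ∫ x in ball 0 R, u x ^ 2 :=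
    mul_nonneg (by positivity) (integral_nonneg fun x => sq_nonneg _)
  simp only [lapR_eq_laplacian] at heq h1 ⊢
  have hbilap : ∀ x ∈ ball 0 R, |Δ (Δ u) x| ≤ 2 * lam * |u x| := fun x hx => by
    rw [eq_sub_of_add_eq (heq x hx), ← sub_mul, abs_mul]
    gcongr
    rw [abs_le]
    constructor <;> linarith [abs_le.1 (hV x hx)]
  have hestimate := h u (2 * lam) hu hbilap h0 h1
  rw [finrank_euclideanSpace_fin] at hestimate
  exact ⟨hestimate.1.trans (by linarith), hestimate.2.trans_eq (by ring)⟩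

/-- Boundary estimates for Navier eigenfunctions of the biharmonic operator `Δ² + V`. -/
theorem stmt1 (n : ℕ) (hn : 2 ≤ n) (R Q : ℝ) (hR : 0 < R) (hQ : 0 < Q) :
    ∃ C > 0, ∀ (V : EuclideanSpace ℝ (Fin n) → ℝ), Measurable V → (∀ x, |V x| ≤ Q) →
      ∀ lam : ℝ, 2 * Q + 1 ≤ lam →
      ∀ u : EuclideanSpace ℝ (Fin n) → ℝ, ContDiff ℝ (⊤ : ℕ∞) u →
      (∀ x ∈ closedBall (0 : EuclideanSpace ℝ (Fin n)) R,
        lapR n (lapR n u) x + V x * u x = lam * u x) →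
      (∀ x ∈ sphere (0 : EuclideanSpace ℝ (Fin n)) R, u x = 0) →
      (∀ x ∈ sphere (0 : EuclideanSpace ℝ (Fin n)) R, lapR n u x = 0) →
      (∫ x in ball (0 : EuclideanSpace ℝ (Fin n)) R, (u x) ^ 2) = 1 →
      (∫ x in sphere (0 : EuclideanSpace ℝ (Fin n)) R,
          (normalDerivR n R u x) ^ 2 ∂(μH[(n : ℝ) - 1])) ≤ C * lam ∧
      (∫ x in sphere (0 : EuclideanSpace ℝ (Fin n)) R,
          (normalDerivR n R (lapR n u) x) ^ 2 ∂(μH[(n : ℝ) - 1])) ≤ C * lam ^ 2 := by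
  obtain ⟨C, hC, h⟩ := stmt1_general (n := n) (by lia) hR
  exact ⟨C, hC, fun V _ hV lam hlam u hu heq h0 h1 hnorm => by
    simpa only [hnorm, mul_one] using h V lam (fun x _ => (hV x).trans (by linarith)) u
      (contDiff_infty.1 hu 4) (fun x hx => heq x (ball_subset_closedBall hx)) h0 h1⟩
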